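/- The integral R_C(2, 2) = ∫_0^∞ x²·cos(2πx)/(exp(2π√x) − 1) dx converges and equals (1/256)·(1 − 5/π + 5/π²). -/

import Mathlib

open MeasureTheory Real Set

lemma rc_integrable_exp_abs : Integrable (fun x : ℝ => Real.exp (-|x|)) := by
  rw [← integrableOn_univ, ← Iic_union_Ioi (a := (0:ℝ)), integrableOn_union]
  constructor
  · refine (integrableOn_exp_Iic 0).congr_fun (fun x hx => ?_) measurableSet_Iic
    simp only [mem_Iic] at hx
    simp [abs_of_nonpos hx]
  · refine (integrableOn_exp_neg_Ioi 0).congr_fun (fun x hx => ?_) measurableSet_Ioi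
    simp only [mem_Ioi] at hx
    simp [abs_of_pos hx]

lemma rc_tendsto_exp_abs (C : ℝ) (u : ℝ → ℝ) (hu : ∀ x, |u x| = |x|) :
    Filter.Tendsto (fun x : ℝ => C * Real.exp (-|u x|)) Filter.atTop (nhds 0) := by
  have h : Filter.Tendsto (fun x : ℝ => C * Real.exp (-|x|)) Filter.atTop (nhds (C * 0)) := by
    refine Filter.Tendsto.const_mul _ ?_
    exact Real.tendsto_exp_neg_atTop_nhds_zero.comp Filter.tendsto_abs_atTop_atTop
  simpa [hu] using h

/-- The closed strip. -/
def rcS (b : ℝ) : Set ℂ := {w | 0 ≤ w.im ∧ w.im ≤ b}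

/-- Upgrading a bound outside a compact set. -/
lemma rc_bound_upgrade (f : ℂ → ℂ) (b : ℝ) (hf : ContinuousOn f (rcS b)) (X C : ℝ)
    (hC : ∀ w ∈ rcS b, X ≤ |w.re| → ‖f w‖ ≤ C * Real.exp (-|w.re|)) :
    ∃ C', ∀ w ∈ rcS b, ‖f w‖ ≤ C' * Real.exp (-|w.re|) := by
  have hK : IsCompact (Icc (-X) X ×ℂ Icc 0 b) := isCompact_Icc.reProdIm isCompact_Icc
  have hsub : (Icc (-X) X ×ℂ Icc 0 b) ⊆ rcS b := fun w hw => hw.2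
  obtain ⟨M, hM⟩ := hK.exists_bound_of_continuousOn (hf.mono hsub)
  refine ⟨max C (M * Real.exp X), fun w hw => ?_⟩
  by_cases h : X ≤ |w.re|
  · exact (hC w hw h).trans (by gcongr; exact le_max_left _ _)
  · push Not at h
    have h1 := hM w ⟨⟨by linarith [(abs_lt.1 h).1], (abs_lt.1 h).2.le⟩, hw⟩
    have hM0 : 0 ≤ M := (norm_nonneg _).trans h1
    calc ‖f w‖ ≤ M * 1 := by simpa using h1
      _ ≤ M * (Real.exp X * Real.exp (-|w.re|)) := by
        gcongr
        rw [← Real.exp_add]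
        exact Real.one_le_exp (by linarith)
      _ = (M * Real.exp X) * Real.exp (-|w.re|) := by ring
      _ ≤ _ := by gcongr; exact le_max_right _ _

lemma rc_line_integrable (f : ℂ → ℂ) (b : ℝ) (hf : ContinuousOn f (rcS b)) (C : ℝ)
    (hC : ∀ w ∈ rcS b, ‖f w‖ ≤ C * Real.exp (-|w.re|)) (y : ℝ) (hy : 0 ≤ y) (hyb : y ≤ b) :
    Integrable (fun x : ℝ => f (x + y * Complex.I)) := by
  have hmem : ∀ x : ℝ, (x + y * Complex.I : ℂ) ∈ rcS b := fun x => by simp [rcS, hy, hyb]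
  refine (rc_integrable_exp_abs.const_mul C).mono' ?_ ?_
  · refine Continuous.aestronglyMeasurable ?_
    exact hf.comp_continuous (by fun_prop) hmem
  · refine Filter.Eventually.of_forall fun x => ?_
    simpa using hC _ (hmem x)

lemma rc_strip (f : ℂ → ℂ) (b : ℝ) (hb : 0 ≤ b) (hf : DifferentiableOn ℂ f (rcS b)) (C : ℝ)
    (hC : ∀ w ∈ rcS b, ‖f w‖ ≤ C * Real.exp (-|w.re|)) :
    ∫ x : ℝ, f x = ∫ x : ℝ, f (x + b * Complex.I) := by
  have i0 := rc_line_integrable f b hf.continuousOn C hC 0 le_rfl hb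
  have i1 := rc_line_integrable f b hf.continuousOn C hC b hb le_rfl
  have t0 := intervalIntegral_tendsto_integral i0 Filter.tendsto_neg_atTop_atBot Filter.tendsto_id
  have t1 := intervalIntegral_tendsto_integral i1 Filter.tendsto_neg_atTop_atBot Filter.tendsto_id
  have hv : ∀ u : ℝ → ℝ, (∀ x, |u x| = |x|) → Filter.Tendsto
      (fun R : ℝ => Complex.I • ∫ y in (0:ℝ)..b, f (u R + y * Complex.I)) Filter.atTop (nhds 0) := by
    intro u hu
    have := (rc_tendsto_exp_abs C u hu).mul_const |b - 0|
    rw [zero_mul] at this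
    refine squeeze_zero_norm (fun R => ?_) this
    rw [norm_smul, Complex.norm_I, one_mul]
    refine intervalIntegral.norm_integral_le_of_norm_le_const fun y hy => ?_
    rw [uIoc_of_le hb] at hy
    simpa using hC (u R + y * Complex.I) (by simp [rcS, hy.1.le, hy.2])
  have key : ∀ R : ℝ, (∫ x in (-R)..R, f (x + (0:ℝ) * Complex.I)) -
      (∫ x in (-R)..R, f (x + b * Complex.I)) +
      Complex.I • (∫ y in (0:ℝ)..b, f (R + y * Complex.I)) -
      Complex.I • (∫ y in (0:ℝ)..b, f ((-R : ℝ) + y * Complex.I)) = 0 := by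
    intro R
    have := Complex.integral_boundary_rect_eq_zero_of_differentiableOn f (-R : ℝ) (R + b * Complex.I)
      (hf.mono ?_)
    · simpa using this
    · intro w hw
      have := hw.2
      simp [uIcc_of_le hb] at this
      exact this
  have tt := ((t0.sub t1).add (hv id (fun _ => rfl))).sub (hv (fun x => -x) (fun x => abs_neg x))
  have h2 := tendsto_nhds_unique tt ((tendsto_const_nhds (x := (0:ℂ))).congr fun R => (key R).symm)
  simp at h2
  exact sub_eq_zero.1 h2

/-- Shift by any complex number whose imaginary part is in range. -/
lemma rc_shift (f : ℂ → ℂ) (c : ℂ) (hb : 0 ≤ c.im) (hf : DifferentiableOn ℂ f (rcS c.im)) (C : ℝ)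
    (hC : ∀ w ∈ rcS c.im, ‖f w‖ ≤ C * Real.exp (-|w.re|)) :
    ∫ x : ℝ, f x = ∫ x : ℝ, f (x + c) := by
  rw [rc_strip f c.im hb hf C hC, ← integral_add_right_eq_self _ c.re]
  congr 1; ext x; congr 1
  push_cast
  rw [add_assoc, Complex.re_add_im]

lemma rc_shift_integrable (f : ℂ → ℂ) (c : ℂ) (hb : 0 ≤ c.im)
    (hf : DifferentiableOn ℂ f (rcS c.im)) (C : ℝ)
    (hC : ∀ w ∈ rcS c.im, ‖f w‖ ≤ C * Real.exp (-|w.re|)) :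
    Integrable (fun x : ℝ => f (x + c)) := by
  have := (rc_line_integrable f c.im hf.continuousOn C hC c.im hb le_rfl).comp_add_right c.re
  refine this.congr (Filter.Eventually.of_forall fun x => ?_)
  simp only
  congr 1
  push_cast
  rw [add_assoc, Complex.re_add_im]

lemma rc_exp_univ (g : ℝ → ℂ) :
    ∫ x : ℝ, Real.exp x • g (Real.exp x) = ∫ y in Ioi (0:ℝ), g y := by
  have := integral_image_eq_integral_abs_deriv_smul
      (MeasurableSet.univ) (fun x _ ↦ (Real.hasDerivAt_exp x).hasDerivWithinAt)
      (fun x _ y _ hxy ↦ Real.exp_injective hxy) g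
  simpa [abs_of_pos (Real.exp_pos _), Real.range_exp] using this.symm

lemma rc_exp_univ_integrable (g : ℝ → ℂ) :
    Integrable (fun x : ℝ => Real.exp x • g (Real.exp x)) ↔ IntegrableOn g (Ioi 0) := by
  have := integrableOn_image_iff_integrableOn_abs_deriv_smul
      (MeasurableSet.univ) (fun x _ ↦ (Real.hasDerivAt_exp x).hasDerivWithinAt)
      (fun x _ y _ hxy ↦ Real.exp_injective hxy) g
  simpa [abs_of_pos (Real.exp_pos _), Real.range_exp] using this.symm

lemma rc_mom_int (k : ℕ) : Integrable (fun s : ℝ => s ^ k * Real.exp (-(2 * π) * s ^ 2)) := by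
  have := integrable_rpow_mul_exp_neg_mul_sq (b := 2 * π) (by positivity) (s := k)
    (by have : (0:ℝ) ≤ k := by positivity
        linarith)
  simpa [Real.rpow_natCast] using this

/-- Gaussian moments. -/
noncomputable def rcM (k : ℕ) : ℝ := ∫ s : ℝ, s ^ k * Real.exp (-(2 * π) * s ^ 2)

lemma rcM_zero : rcM 0 = 1 / √2 := by
  have := integral_gaussian (2 * π)
  simp only [rcM, pow_zero, one_mul, this]
  rw [show π / (2 * π) = 1 / 2 by field_simp]
  simp

lemma rcM_one : rcM 1 = 0 := by
  have h := integral_eq_zero_of_hasDerivAt_of_integrable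
    (f := fun s : ℝ => s ^ 0 * Real.exp (-(2 * π) * s ^ 2))
    (f' := fun s : ℝ => (-(4 * π)) * (s ^ 1 * Real.exp (-(2 * π) * s ^ 2)))
    (fun s => by
      have := ((hasDerivAt_pow 2 s).const_mul (-(2 * π))).exp
      simp only [pow_zero, one_mul]
      refine this.congr_deriv ?_
      push_cast; ring) ((rc_mom_int 1).const_mul _) (rc_mom_int 0)
  rw [integral_const_mul] at h
  have hp := Real.pi_pos
  rcases mul_eq_zero.1 h with h | h
  · linarith
  · exact h

lemma rcM_succ (k : ℕ) : rcM (k + 2) = (k + 1) / (4 * π) * rcM k := by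
  have h := integral_eq_zero_of_hasDerivAt_of_integrable
    (f := fun s : ℝ => s ^ (k + 1) * Real.exp (-(2 * π) * s ^ 2))
    (f' := fun s : ℝ => (k + 1) * (s ^ k * Real.exp (-(2 * π) * s ^ 2)) -
      (4 * π) * (s ^ (k + 2) * Real.exp (-(2 * π) * s ^ 2)))
    (fun s => by
      have := (hasDerivAt_pow (k + 1) s).mul (((hasDerivAt_pow 2 s).const_mul (-(2 * π))).exp)
      refine this.congr_deriv ?_
      push_cast
      ring) (((rc_mom_int k).const_mul _).sub ((rc_mom_int (k + 2)).const_mul _))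
        (rc_mom_int (k + 1))
  rw [integral_sub ((rc_mom_int k).const_mul _) ((rc_mom_int (k + 2)).const_mul _),
    integral_const_mul, integral_const_mul] at h
  change (k + 1) * rcM k - 4 * π * rcM (k + 2) = 0 at h
  have hp := Real.pi_pos
  field_simp
  linarith

/-- The complex Gaussian. -/
noncomputable def rcG (w : ℂ) : ℂ := Complex.exp (-(2 * π) * w ^ 2)

lemma rcG_ofReal (s : ℝ) : rcG s = (Real.exp (-(2 * π) * s ^ 2) : ℝ) := by
  simp [rcG]

lemma rc_mom_int_c (k : ℕ) : Integrable (fun s : ℝ => (s : ℂ) ^ k * rcG s) := by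
  refine (rc_mom_int k).ofReal.congr (Filter.Eventually.of_forall fun s => ?_)
  simp [rcG_ofReal]

lemma rc_mom_c (k : ℕ) : ∫ s : ℝ, (s : ℂ) ^ k * rcG s = rcM k := by
  rw [rcM, ← integral_complex_ofReal]
  congr 1; ext s; simp [rcG_ofReal]

lemma rc_poly_int (p : Polynomial ℂ) : Integrable (fun s : ℝ => p.eval (s : ℂ) * rcG s) := by
  induction p using Polynomial.induction_on' with
  | add p q hp hq =>
    refine (hp.add hq).congr (Filter.Eventually.of_forall fun s => ?_)
    simp [add_mul]
  | monomial n a =>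
    refine ((rc_mom_int_c n).const_mul a).congr (Filter.Eventually.of_forall fun s => ?_)
    simp [mul_assoc]

lemma rc_poly_eval (c : Fin 7 → ℂ) :
    ∫ s : ℝ, (∑ k : Fin 7, c k * (s:ℂ) ^ (k:ℕ)) * rcG s = ∑ k : Fin 7, c k * rcM k := by
  simp_rw [Finset.sum_mul]
  rw [integral_finsetSum]
  · refine Finset.sum_congr rfl fun k _ => ?_
    simp_rw [mul_assoc]
    rw [integral_const_mul, rc_mom_c]
  · intro k _
    simp_rw [mul_assoc]
    exact (rc_mom_int_c k).const_mul _

lemma rc_poly_bound (p : Polynomial ℂ) : ∃ C, 0 ≤ C ∧ ∀ z, ‖p.eval z‖ ≤ C * Real.exp ‖z‖ := by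
  induction p using Polynomial.induction_on' with
  | add p q hp hq =>
    obtain ⟨C, hC0, hC⟩ := hp
    obtain ⟨D, hD0, hD⟩ := hq
    refine ⟨C + D, by positivity, fun z => ?_⟩
    rw [Polynomial.eval_add, add_mul]
    exact (norm_add_le _ _).trans (add_le_add (hC z) (hD z))
  | monomial n a =>
    refine ⟨‖a‖ * n.factorial, by positivity, fun z => ?_⟩
    have := Real.pow_div_factorial_le_exp ‖z‖ (norm_nonneg _) n
    rw [div_le_iff₀ (by positivity)] at this
    simp only [Polynomial.eval_monomial, norm_mul, norm_pow]
    rw [mul_assoc]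
    gcongr
    linarith

lemma rc_gauss_bound (w : ℂ) (h0 : 0 ≤ w.im) (h1 : w.im ≤ 1) :
    Real.exp ‖w‖ * ‖rcG w‖ ≤ Real.exp 20 * Real.exp (-|w.re|) := by
  have hn : ‖w‖ ≤ |w.re| + |w.im| := Complex.norm_le_abs_re_add_abs_im w
  rw [abs_of_nonneg h0] at hn
  rw [rcG, Complex.norm_exp, ← Real.exp_add, ← Real.exp_add]
  apply Real.exp_le_exp.2
  have : (-(2 * (π:ℂ)) * w ^ 2).re = -(2 * π) * (|w.re| ^ 2 - w.im ^ 2) := by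
    rw [sq_abs]
    simp [pow_two]
  rw [this]
  have hp := Real.pi_gt_three
  have hp' := Real.pi_lt_d2
  have ha := abs_nonneg w.re
  generalize |w.re| = a at *
  have e1 : π * w.im ^ 2 ≤ 3.15 := by nlinarith
  have e2 : 3 * a ^ 2 ≤ π * a ^ 2 := by gcongr
  nlinarith [sq_nonneg (a - 1)]

lemma rc_polyG_bound (p : Polynomial ℂ) (b : ℝ) (hb : b ≤ 1) :
    ∃ C, ∀ w ∈ rcS b, ‖p.eval w * rcG w‖ ≤ C * Real.exp (-|w.re|) := by
  obtain ⟨C, hC0, hC⟩ := rc_poly_bound p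
  refine ⟨C * Real.exp 20, fun w hw => ?_⟩
  rw [norm_mul]
  calc _ ≤ C * Real.exp ‖w‖ * ‖rcG w‖ := by gcongr; exact hC w
    _ = C * (Real.exp ‖w‖ * ‖rcG w‖) := by ring
    _ ≤ C * (Real.exp 20 * Real.exp (-|w.re|)) :=
      mul_le_mul_of_nonneg_left (rc_gauss_bound w hw.1 (hw.2.trans hb)) hC0
    _ = _ := by ring

lemma rcG_diff : Differentiable ℂ rcG := by unfold rcG; fun_prop

lemma rc_polyG_shift (p : Polynomial ℂ) (c : ℂ) (h0 : 0 ≤ c.im) (h1 : c.im ≤ 1) :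
    ∫ x : ℝ, p.eval (x : ℂ) * rcG x = ∫ x : ℝ, p.eval (x + c : ℂ) * rcG (x + c) := by
  obtain ⟨C, hC⟩ := rc_polyG_bound p c.im h1
  exact rc_shift (fun w => p.eval w * rcG w) c h0
    ((p.differentiable.mul rcG_diff).differentiableOn) C hC

lemma rc_polyG_shift_int (p : Polynomial ℂ) (c : ℂ) (h0 : 0 ≤ c.im) (h1 : c.im ≤ 1) :
    Integrable fun x : ℝ => p.eval (x + c : ℂ) * rcG (x + c) := by
  obtain ⟨C, hC⟩ := rc_polyG_bound p c.im h1
  exact rc_shift_integrable (fun w => p.eval w * rcG w) c h0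
    ((p.differentiable.mul rcG_diff).differentiableOn) C hC

/-- The eighth root of unity. -/
noncomputable def rcw : ℂ := ((1 / √2 : ℝ) : ℂ) * (1 + Complex.I)

lemma rcw_re : rcw.re = 1 / √2 := by simp [rcw, -one_div, -Complex.ofReal_div]
lemma rcw_im : rcw.im = 1 / √2 := by simp [rcw, -one_div, -Complex.ofReal_div]
lemma rc_sq2 : (1 / √2) * (1 / √2) = (1 / 2 : ℝ) := by
  rw [div_mul_div_comm, Real.mul_self_sqrt (by norm_num)]; norm_num
lemma rcw_sq : rcw ^ 2 = Complex.I := by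
  have h : (((1 / √2 : ℝ) : ℂ)) * ((1 / √2 : ℝ) : ℂ) = 1 / 2 := by
    rw [← Complex.ofReal_mul, rc_sq2]; simp
  calc rcw ^ 2 = (((1 / √2 : ℝ) : ℂ)) * ((1 / √2 : ℝ) : ℂ) * (1 + 2 * Complex.I + Complex.I ^ 2) := by
        unfold rcw; ring
    _ = _ := by rw [h, Complex.I_sq]; ring
lemma rcw_ne : rcw ≠ 0 := by
  intro h
  have := rcw_sq
  rw [h] at this
  simp at this
  exact Complex.I_ne_zero this.symm
lemma rc_s_pos : 0 < 1 / √2 := by positivity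
lemma rc_s_lt : 1 / √2 < 1 := by nlinarith [rc_sq2, rc_s_pos]

/-- `q - 1`. -/
noncomputable def rcf (w : ℂ) : ℂ := Complex.exp (2 * π * rcw * w) - 1

lemma rcf_diff : Differentiable ℂ rcf := by unfold rcf; fun_prop
lemma rcf_zero : rcf 0 = 0 := by simp [rcf]
lemma rcf_add (w : ℂ) : rcf (w + rcw) = rcf w := by
  have : 2 * π * rcw * (w + rcw) = 2 * π * rcw * w + 2 * π * Complex.I := by
    rw [← rcw_sq]; ring
  simp [rcf, this, Complex.exp_add]
lemma rcf_w : rcf rcw = 0 := by simpa [rcf_zero] using rcf_add 0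
lemma rcf_deriv (w : ℂ) : HasDerivAt rcf (Complex.exp (2 * π * rcw * w) * (2 * π * rcw)) w := by
  have := (((hasDerivAt_id w).const_mul (2 * π * rcw)).cexp).sub_const 1
  refine (this.congr_deriv (by simp)).congr_of_eventuallyEq ?_
  exact Filter.Eventually.of_forall fun w => rfl

lemma rcf_zeros (w : ℂ) (h : rcf w = 0) (h0 : 0 ≤ w.im) (h1 : w.im ≤ 1 / √2) :
    w = 0 ∨ w = rcw := by
  rw [rcf, sub_eq_zero, Complex.exp_eq_one_iff] at h
  obtain ⟨n, hn⟩ := h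
  have hp : (π : ℂ) ≠ 0 := by exact_mod_cast Real.pi_ne_zero
  have hw : w = n * rcw := by
    have : 2 * π * rcw * (w - n * rcw) = 0 := by
      have : 2 * π * rcw * (w - n * rcw) = 2 * π * rcw * w - n * (2 * π * rcw ^ 2) := by ring
      rw [this, hn, rcw_sq]; ring
    have h2 : (2 * π * rcw : ℂ) ≠ 0 := by simp [hp, rcw_ne]
    exact sub_eq_zero.1 ((mul_eq_zero.1 this).resolve_left h2)
  have him : w.im = n * (1 / √2) := by
    rw [hw]; simp [rcw_im]
  rw [him] at h0 h1
  have n0 : (0:ℝ) ≤ n := by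
    by_contra hc
    push Not at hc
    nlinarith [rc_s_pos]
  have n1 : (n:ℝ) ≤ 1 := by
    by_contra hc
    push Not at hc
    nlinarith [rc_s_pos]
  have n0' : 0 ≤ n := by exact_mod_cast n0
  have n1' : n ≤ 1 := by exact_mod_cast n1
  interval_cases n
  · left; simpa using hw
  · right; simpa using hw

/-- Desingularised denominator. -/
noncomputable def rcD : ℂ → ℂ := dslope (dslope rcf 0) rcw

lemma rc_dslope_diff {f : ℂ → ℂ} (hf : Differentiable ℂ f) (c : ℂ) :
    Differentiable ℂ (dslope f c) := by
  rw [← differentiableOn_univ]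
  exact (Complex.differentiableOn_dslope Filter.univ_mem).2 hf.differentiableOn

lemma rcD_diff : Differentiable ℂ rcD := rc_dslope_diff (rc_dslope_diff rcf_diff 0) rcw

lemma rc_g (w : ℂ) : w * dslope rcf 0 w = rcf w := by
  have := sub_smul_dslope rcf 0 w
  simpa [rcf_zero] using this

lemma rc_g_w : dslope rcf 0 rcw = 0 := by
  have := rc_g rcw
  rw [rcf_w] at this
  exact (mul_eq_zero.1 this).resolve_left rcw_ne

lemma rc_gD (w : ℂ) : (w - rcw) * rcD w = dslope rcf 0 w := by
  have := sub_smul_dslope (dslope rcf 0) rcw w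
  simpa [rc_g_w, rcD] using this

lemma rcD_eq (w : ℂ) : w * (w - rcw) * rcD w = rcf w := by
  rw [mul_assoc, rc_gD, rc_g]

lemma rcD_ne (w : ℂ) (h0 : 0 ≤ w.im) (h1 : w.im ≤ 1 / √2) : rcD w ≠ 0 := by
  intro h
  have hp : (π : ℂ) ≠ 0 := by exact_mod_cast Real.pi_ne_zero
  have hf : rcf w = 0 := by rw [← rcD_eq, h, mul_zero]
  rcases rcf_zeros w hf h0 h1 with rfl | rfl
  · have h2 := rc_gD 0
    rw [h, mul_zero, dslope_same, (rcf_deriv 0).deriv] at h2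
    simp [hp, rcw_ne] at h2
  · have hd := (rc_dslope_diff rcf_diff 0 rcw).hasDerivAt
    have h3 := (hasDerivAt_id rcw).mul hd
    have h4 : HasDerivAt rcf _ rcw := h3.congr_of_eventuallyEq
      (Filter.Eventually.of_forall fun w => (rc_g w).symm)
    have h5 := h4.unique (rcf_deriv rcw)
    have h6 : deriv (dslope rcf 0) rcw = 0 := by
      rw [← dslope_same (dslope rcf 0) rcw]; exact h
    rw [h6, rc_g_w] at h5
    simp [hp, rcw_ne] at h5

/-- Shifted Bernoulli polynomial, as a function. -/
noncomputable def rcB (x : ℂ) : ℂ := x ^ 2 * (x - 1) ^ 2 * (x ^ 2 - x - 1 / 2)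

lemma rcB_add (x : ℂ) : rcB (x + 1) - rcB x = 6 * x ^ 5 := by unfold rcB; ring

open Polynomial in
/-- `B(w/ω + t)` as a polynomial in `w`. -/
noncomputable def rcP (t : ℂ) : Polynomial ℂ :=
  (C rcw⁻¹ * X + C t) ^ 2 * (C rcw⁻¹ * X + C t - 1) ^ 2 *
    ((C rcw⁻¹ * X + C t) ^ 2 - (C rcw⁻¹ * X + C t) - C (1 / 2))

lemma rcP_eval (t w : ℂ) : (rcP t).eval w = rcB (rcw⁻¹ * w + t) := by
  simp [rcP, rcB]

/-- The function whose contour integral is used. -/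
noncomputable def rcF (w : ℂ) : ℂ :=
  (rcw⁻¹ ^ 2 * ((rcw⁻¹ * w) * (rcw⁻¹ * w - 1) * ((rcw⁻¹ * w) ^ 2 - (rcw⁻¹ * w) - 1 / 2))) *
    rcG w / rcD w

lemma rcF_eq (w : ℂ) (h : rcf w ≠ 0) : rcF w = rcB (rcw⁻¹ * w) * rcG w / rcf w := by
  have h' := h
  rw [← rcD_eq] at h'
  have hD : rcD w ≠ 0 := right_ne_zero_of_mul h'
  rw [rcF, div_eq_div_iff hD h, ← rcD_eq, rcB]
  have h1 : rcw⁻¹ * w - 1 = rcw⁻¹ * (w - rcw) := by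
    rw [mul_sub, inv_mul_cancel₀ rcw_ne]
  rw [h1]
  ring

lemma rcF_diff : DifferentiableOn ℂ rcF (rcS rcw.im) := by
  have hD := rcD_diff
  have hG := rcG_diff
  unfold rcF
  refine DifferentiableOn.div ?_ hD.differentiableOn ?_
  · refine Differentiable.differentiableOn ?_
    fun_prop
  · intro w hw
    exact rcD_ne w hw.1 (rcw_im ▸ hw.2)

lemma rcf_bound (w : ℂ) (hw : w ∈ rcS rcw.im) (h : 2 ≤ |w.re|) : 1 / 2 ≤ ‖rcf w‖ := by
  have hq : ‖Complex.exp (2 * π * rcw * w)‖ = Real.exp (2 * π * (1 / √2) * (w.re - w.im)) := by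
    rw [Complex.norm_exp]
    congr 1
    simp [rcw_re, rcw_im, -one_div]
    ring
  obtain ⟨h0, h1⟩ := hw
  rw [rcw_im] at h1
  have hs : 1 / 2 < 1 / √2 := by nlinarith [rc_sq2, rc_s_pos]
  have hk : 2 ≤ 2 * π * (1 / √2) := by nlinarith [Real.pi_gt_three]
  have hs1 := rc_s_lt
  rcases le_abs.1 h with h | h
  · have : 2 ≤ Real.exp (2 * π * (1 / √2) * (w.re - w.im)) := by
      have := Real.add_one_le_exp (2 * π * (1 / √2) * (w.re - w.im))
      nlinarith
    have h3 := norm_sub_norm_le (Complex.exp (2 * π * rcw * w)) 1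
    rw [hq, norm_one] at h3
    unfold rcf
    linarith
  · have : 2 ≤ Real.exp (-(2 * π * (1 / √2) * (w.re - w.im))) := by
      have := Real.add_one_le_exp (-(2 * π * (1 / √2) * (w.re - w.im)))
      nlinarith
    rw [Real.exp_neg] at this
    have h4 : Real.exp (2 * π * (1 / √2) * (w.re - w.im)) ≤ 1 / 2 := by
      have hpos := Real.exp_pos (2 * π * (1 / √2) * (w.re - w.im))
      rw [le_inv_comm₀ (by norm_num) hpos] at this
      simpa using this
    have h3 := norm_sub_norm_le 1 (Complex.exp (2 * π * rcw * w))
    rw [hq, norm_one, norm_sub_rev] at h3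
    unfold rcf
    linarith

lemma rcF_bound : ∃ C, ∀ w ∈ rcS rcw.im, ‖rcF w‖ ≤ C * Real.exp (-|w.re|) := by
  obtain ⟨C, hC⟩ := rc_polyG_bound (rcP 0) rcw.im (rcw_im ▸ rc_s_lt.le)
  refine rc_bound_upgrade rcF rcw.im rcF_diff.continuousOn 2 (2 * C) fun w hw h2 => ?_
  have hb := rcf_bound w hw h2
  have hne : rcf w ≠ 0 := by
    intro h; rw [h, norm_zero] at hb; norm_num at hb
  have h3 := hC w hw
  rw [rcP_eval, add_zero] at h3
  rw [rcF_eq w hne, norm_div, div_le_iff₀ (by linarith)]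
  have : 0 ≤ C * Real.exp (-|w.re|) := (norm_nonneg _).trans h3
  nlinarith

lemma rcw_im_nonneg : 0 ≤ rcw.im := rcw_im ▸ rc_s_pos.le

lemma rcF_shift : ∫ x : ℝ, rcF x = ∫ x : ℝ, rcF (x + rcw) := by
  obtain ⟨C, hC⟩ := rcF_bound
  exact rc_shift rcF rcw rcw_im_nonneg rcF_diff C hC

lemma rcF_int : Integrable fun x : ℝ => rcF (x + rcw) := by
  obtain ⟨C, hC⟩ := rcF_bound
  exact rc_shift_integrable rcF rcw rcw_im_nonneg rcF_diff C hC

lemma rcF_int0 : Integrable fun x : ℝ => rcF x := by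
  obtain ⟨C, hC⟩ := rcF_bound
  simpa using rc_line_integrable rcF rcw.im rcF_diff.continuousOn C hC 0 le_rfl rcw_im_nonneg

lemma rcf_real_ne (s : ℝ) (hs : s ≠ 0) : rcf s ≠ 0 := by
  intro h
  rcases rcf_zeros s h (by simp) (by simp) with h | h
  · exact hs (by exact_mod_cast h)
  · have := congrArg Complex.im h
    rw [rcw_im, Complex.ofReal_im] at this
    exact rc_s_pos.ne this

lemma rcG_add (w : ℂ) : rcG (w + rcw) * (rcf w + 1) ^ 2 = rcG w := by
  simp only [rcG, rcf, sub_add_cancel]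
  rw [← Complex.exp_nat_mul, ← Complex.exp_add]
  rw [show (-(2 * π) * (w + rcw) ^ 2 + (2:ℕ) * (2 * π * rcw * w) : ℂ) =
    -(2 * π) * w ^ 2 - 2 * π * rcw ^ 2 by push_cast; ring, rcw_sq, Complex.exp_sub,
    Complex.exp_two_pi_mul_I, div_one]

lemma rcG_add_half (w : ℂ) : Complex.I * rcG (w + rcw / 2) * (rcf w + 1) = rcG w := by
  simp only [rcG, rcf, sub_add_cancel]
  rw [mul_assoc, ← Complex.exp_add]
  rw [show (-(2 * π) * (w + rcw / 2) ^ 2 + (2 * π * rcw * w) : ℂ) =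
    -(2 * π) * w ^ 2 - π / 2 * rcw ^ 2 by ring, rcw_sq, Complex.exp_sub,
    Complex.exp_pi_div_two_mul_I]
  field_simp

/-- The kernel on the line. -/
noncomputable def rck (s : ℝ) : ℂ := (s:ℂ) ^ 5 * rcG s / rcf s

lemma rc_half_im : (rcw / 2).im = 1 / √2 / 2 := by
  rw [show rcw / 2 = rcw / (2:ℝ) by simp, Complex.div_ofReal_im, rcw_im]

lemma rck_ae : ∀ᵐ s : ℝ, 6 * rcw⁻¹ ^ 5 * rck s = rcF (s + rcw) - rcF s +
    ((rcP 0).eval (s + rcw) * rcG (s + rcw) +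
      Complex.I * ((rcP (1 / 2)).eval (s + rcw / 2) * rcG (s + rcw / 2))) := by
  have : ∀ᵐ s : ℝ, s ≠ 0 := by simp [ae_iff]
  filter_upwards [this] with s hs
  have hne := rcf_real_ne s hs
  have hne2 : rcf (s + rcw) ≠ 0 := by rwa [rcf_add]
  rw [rcF_eq _ hne, rcF_eq _ hne2, rcf_add, rcP_eval, rcP_eval, rck]
  have e1 : rcw⁻¹ * (s + rcw) = rcw⁻¹ * s + 1 := by rw [mul_add, inv_mul_cancel₀ rcw_ne]
  have e2 : rcw⁻¹ * (s + rcw / 2) + 1 / 2 = rcw⁻¹ * s + 1 := by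
    rw [mul_add, mul_div, inv_mul_cancel₀ rcw_ne]; ring
  rw [e2, e1, add_zero]
  have hB := rcB_add (rcw⁻¹ * s)
  have hB' : rcB (rcw⁻¹ * s) = rcB (rcw⁻¹ * s + 1) - 6 * (rcw⁻¹ * s) ^ 5 := by rw [← hB]; ring
  rw [hB']
  have hq : rcf s + 1 ≠ 0 := by simp [rcf]
  have g1 := rcG_add s
  have g2 := rcG_add_half s
  have g1' : rcG (s + rcw) = rcG s / (rcf s + 1) ^ 2 := by
    rw [eq_div_iff (pow_ne_zero 2 hq), g1]
  have g2' : Complex.I * rcG (s + rcw / 2) = rcG s / (rcf s + 1) := by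
    rw [eq_div_iff hq, g2]
  rw [mul_left_comm, g2', g1']
  generalize rcB (rcw⁻¹ * s + 1) = b
  generalize rcf s = f at *
  generalize rcG s = g
  generalize rcw⁻¹ = a
  field_simp
  ring

lemma rck_int : Integrable rck := by
  have h1 := rc_polyG_shift_int (rcP 0) rcw rcw_im_nonneg (rcw_im ▸ rc_s_lt.le)
  have h2 := rc_polyG_shift_int (rcP (1/2)) (rcw / 2)
    (by rw [rc_half_im]; positivity) (by rw [rc_half_im]; linarith [rc_s_lt])
  have h := ((rcF_int.sub rcF_int0).add (h1.add (h2.const_mul Complex.I)))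
  have h' := h.congr (rck_ae.mono fun s hs => by simpa only [Pi.add_apply, Pi.sub_apply] using hs.symm)
  have hc : (6 * rcw⁻¹ ^ 5 : ℂ) ≠ 0 := by simp [rcw_ne]
  exact (integrable_const_mul_iff (IsUnit.mk0 _ hc) _).1 h'

lemma rck_integral : 6 * rcw⁻¹ ^ 5 * ∫ s, rck s =
    (∫ s : ℝ, (rcP 0).eval (s:ℂ) * rcG s) +
      Complex.I * ∫ s : ℝ, (rcP (1 / 2)).eval (s:ℂ) * rcG s := by
  have h1 := rc_polyG_shift_int (rcP 0) rcw rcw_im_nonneg (rcw_im ▸ rc_s_lt.le)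
  have h2 := rc_polyG_shift_int (rcP (1/2)) (rcw / 2)
    (by rw [rc_half_im]; positivity) (by rw [rc_half_im]; linarith [rc_s_lt])
  rw [rc_polyG_shift (rcP 0) rcw rcw_im_nonneg (rcw_im ▸ rc_s_lt.le),
    rc_polyG_shift (rcP (1/2)) (rcw / 2)
    (by rw [rc_half_im]; positivity) (by rw [rc_half_im]; linarith [rc_s_lt]),
    ← integral_const_mul, integral_congr_ae rck_ae]
  have a1 := integral_add (rcF_int.sub rcF_int0) (h1.add (h2.const_mul Complex.I))
  have a2 := integral_add h1 (h2.const_mul Complex.I)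
  have a3 := integral_sub rcF_int rcF_int0
  simp only [Pi.add_apply, Pi.sub_apply] at a1 a2 a3
  rw [a1, a2, a3, ← rcF_shift, sub_self, zero_add, integral_const_mul]

lemma rcw_inv_sq : rcw⁻¹ ^ 2 = -Complex.I := by
  rw [inv_pow, rcw_sq, Complex.inv_I]

lemma rc_val0 : ∫ s : ℝ, (rcP 0).eval (s:ℂ) * rcG s =
    Complex.I / 2 * rcM 2 - 5 / 2 * rcM 4 + Complex.I * rcM 6 := by
  have h := rc_poly_eval ![0, 0, -rcw⁻¹ ^ 2 / 2, 0, 5 / 2 * rcw⁻¹ ^ 4, -3 * rcw⁻¹ ^ 5, rcw⁻¹ ^ 6]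
  have e4 : rcw⁻¹ ^ 4 = -1 := by
    rw [show rcw⁻¹ ^ 4 = (rcw⁻¹ ^ 2) ^ 2 by ring, rcw_inv_sq]; simp
  have e6 : rcw⁻¹ ^ 6 = Complex.I := by
    rw [show rcw⁻¹ ^ 6 = (rcw⁻¹ ^ 2) * rcw⁻¹ ^ 4 by ring, rcw_inv_sq, e4]; simp
  have h5 : rcM 5 = 0 := by rw [rcM_succ 3, rcM_succ 1, rcM_one]; simp
  have hl : ∀ s : ℝ, (rcP 0).eval (s:ℂ) = ∑ k : Fin 7,
     (![0, 0, -rcw⁻¹ ^ 2 / 2, 0, 5 / 2 * rcw⁻¹ ^ 4, -3 * rcw⁻¹ ^ 5, rcw⁻¹ ^ 6] : Fin 7 → ℂ) k * (s:ℂ) ^ (k:ℕ) := by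
    intro s
    rw [rcP_eval, rcB]
    simp [Fin.sum_univ_succ, -inv_pow]
    ring
  simp_rw [hl, h]
  rw [e4, e6, rcw_inv_sq]
  simp [Fin.sum_univ_succ, h5, -inv_pow]
  ring

lemma rc_val1 : ∫ s : ℝ, (rcP (1 / 2)).eval (s:ℂ) * rcG s =
    -3 / 64 * rcM 0 - 7 / 16 * Complex.I * rcM 2 + 5 / 4 * rcM 4 + Complex.I * rcM 6 := by
  have h := rc_poly_eval ![-3 / 64, 0, 7 / 16 * rcw⁻¹ ^ 2, 0, -5 / 4 * rcw⁻¹ ^ 4, 0, rcw⁻¹ ^ 6]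
  have e4 : rcw⁻¹ ^ 4 = -1 := by
    rw [show rcw⁻¹ ^ 4 = (rcw⁻¹ ^ 2) ^ 2 by ring, rcw_inv_sq]; simp
  have e6 : rcw⁻¹ ^ 6 = Complex.I := by
    rw [show rcw⁻¹ ^ 6 = (rcw⁻¹ ^ 2) * rcw⁻¹ ^ 4 by ring, rcw_inv_sq, e4]; simp
  have hl : ∀ s : ℝ, (rcP (1 / 2)).eval (s:ℂ) = ∑ k : Fin 7,
     (![-3 / 64, 0, 7 / 16 * rcw⁻¹ ^ 2, 0, -5 / 4 * rcw⁻¹ ^ 4, 0, rcw⁻¹ ^ 6] : Fin 7 → ℂ) k * (s:ℂ) ^ (k:ℕ) := by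
    intro s
    rw [rcP_eval, rcB]
    simp [Fin.sum_univ_succ, -inv_pow]
    ring
  simp_rw [hl, h]
  rw [e4, e6, rcw_inv_sq]
  simp [Fin.sum_univ_succ, -inv_pow]
  ring

/-- The value of the full-line integral. -/
lemma rck_value : (-Complex.I * ∫ s, rck s).re = (1 / 256) * (1 - 5 / π + 5 / π ^ 2) := by
  have h := rck_integral
  rw [rc_val0, rc_val1] at h
  have e5 : -Complex.I = rcw * Complex.I * rcw⁻¹ ^ 5 := by
    rw [show rcw * Complex.I * rcw⁻¹ ^ 5 = (rcw * rcw⁻¹) * Complex.I * (rcw⁻¹ ^ 2) ^ 2 by ring,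
      rcw_inv_sq, mul_inv_cancel₀ rcw_ne]
    simp
  have h2 : -Complex.I * ∫ s, rck s = rcw * Complex.I / 6 * (6 * rcw⁻¹ ^ 5 * ∫ s, rck s) := by
    rw [e5]; ring
  rw [h2, h]
  have m2 : rcM 2 = 1 / (4 * π) * rcM 0 := by simpa using rcM_succ 0
  have m4 : rcM 4 = 3 / (4 * π) * rcM 2 := by have := rcM_succ 2; norm_num at this ⊢; exact this
  have m6 : rcM 6 = 5 / (4 * π) * rcM 4 := by have := rcM_succ 4; norm_num at this ⊢; exact this
  rw [m6, m4, m2, rcM_zero, rcw]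
  have key := rc_sq2
  generalize 1 / √2 = r at *
  have hk : (r:ℂ) * r = 1 / 2 := by rw [← Complex.ofReal_mul, key]; simp
  have hp : (π:ℂ) ≠ 0 := by exact_mod_cast Real.pi_ne_zero
  have fin : ∀ u v : ℝ, ((r:ℂ) * (1 + Complex.I) * Complex.I / 6 * (r * (u + v * Complex.I))).re
      = (-u - v) / 12 := by
    intro u v
    rw [show (r:ℂ) * (1 + Complex.I) * Complex.I / 6 * (r * (u + v * Complex.I)) =
      (r * r) * ((1 + Complex.I) * Complex.I * (u + v * Complex.I) / 6) by ring, hk]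
    rw [show (1 / 2 * ((1 + Complex.I) * Complex.I * (u + v * Complex.I) / 6) : ℂ) =
      (((-u - v) / 12 : ℝ) : ℂ) + ((u - v) / 12 : ℝ) * Complex.I by
        push_cast
        linear_combination ((1 + Complex.I) * v / 12 + u / 12) * Complex.I_sq]
    simp
  convert fin (-5 / 2 * (3 / (4 * π) * (1 / (4 * π))) + 7 / 16 * (1 / (4 * π))
      - 5 / (4 * π) * (3 / (4 * π) * (1 / (4 * π))))
    (1 / 2 * (1 / (4 * π)) + 5 / (4 * π) * (3 / (4 * π) * (1 / (4 * π))) - 3 / 64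
      + 5 / 4 * (3 / (4 * π) * (1 / (4 * π)))) using 2
  · push_cast
    congr 1
    linear_combination (-(7 / 16) * (1 / (4 * (π:ℂ))) * r
      + 5 / (4 * (π:ℂ)) * (3 / (4 * π) * (1 / (4 * π))) * r) * Complex.I_sq
  · have := Real.pi_ne_zero
    field_simp
    ring

/-- The integrand in the sector. -/
noncomputable def rch (z : ℂ) : ℂ :=
  z ^ 5 * Complex.exp (2 * π * Complex.I * z ^ 2) / (Complex.exp (2 * π * z) - 1)

lemma rc_cos_bound (y : ℝ) (h0 : 0 ≤ y) (h1 : y ≤ π / 4) : 2 / 3 ≤ Real.cos y ∧ 0 ≤ Real.sin y := by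
  have hp := Real.pi_pos
  constructor
  · have := Real.cos_le_cos_of_nonneg_of_le_pi h0 (by linarith) h1
    rw [Real.cos_pi_div_four] at this
    have h2 : (4 / 3 : ℝ) ≤ √2 := Real.le_sqrt_of_sq_le (by norm_num)
    linarith
  · exact Real.sin_nonneg_of_nonneg_of_le_pi h0 (by linarith)

lemma rc_den_bound (r : ℝ) (hr : 0 < r) (z : ℂ) (hz : 2 / 3 * r ≤ z.re) :
    r * Real.exp r ≤ ‖Complex.exp (2 * π * z) - 1‖ := by
  have h3 := norm_sub_norm_le (Complex.exp (2 * π * z)) 1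
  rw [Complex.norm_exp, norm_one] at h3
  have hre : (2 * π * z : ℂ).re = 2 * π * z.re := by simp
  rw [hre] at h3
  have h4 : Real.exp (r + r) ≤ Real.exp (2 * π * z.re) := by
    apply Real.exp_le_exp.2
    nlinarith [Real.pi_gt_three]
  rw [Real.exp_add] at h4
  have h5 := Real.add_one_le_exp r
  nlinarith [Real.exp_pos r]

lemma rc_phi_geom (w : ℂ) (hw : w ∈ rcS (π / 4)) :
    2 / 3 * Real.exp w.re ≤ (Complex.exp w).re ∧ 0 ≤ (Complex.exp w).im := by
  obtain ⟨h1, h2⟩ := rc_cos_bound w.im hw.1 hw.2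
  have := Real.exp_pos w.re
  rw [Complex.exp_re, Complex.exp_im]
  constructor
  · nlinarith
  · positivity

lemma rc_phi_bound (w : ℂ) (hw : w ∈ rcS (π / 4)) :
    ‖Complex.exp w * rch (Complex.exp w)‖ ≤ 720 * Real.exp (-|w.re|) := by
  obtain ⟨h1, h2⟩ := rc_phi_geom w hw
  have hr := Real.exp_pos w.re
  have hd := rc_den_bound _ hr _ h1
  have hn : ‖Complex.exp w‖ = Real.exp w.re := Complex.norm_exp w
  have hab : Real.exp (-|w.re|) = min (Real.exp w.re) (Real.exp w.re)⁻¹ := by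
    rw [← Real.exp_neg]
    rcases le_total 0 w.re with h | h
    · rw [abs_of_nonneg h, min_eq_right (Real.exp_le_exp.2 (by linarith))]
    · rw [abs_of_nonpos h, neg_neg, min_eq_left (Real.exp_le_exp.2 (by linarith))]
  rw [hab]
  generalize Real.exp w.re = r at *
  generalize Complex.exp w = z at *
  have he : ‖Complex.exp (2 * π * Complex.I * z ^ 2)‖ ≤ 1 := by
    rw [Complex.norm_exp]
    apply Real.exp_le_one_iff.2
    have : (2 * π * Complex.I * z ^ 2 : ℂ).re = -(4 * π * (z.re * z.im)) := by
      simp [pow_two]; ring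
    rw [this]
    have : 0 ≤ z.re := by nlinarith
    have := Real.pi_pos
    have : 0 ≤ 4 * π * (z.re * z.im) := by positivity
    linarith
  have hpos : 0 < r * Real.exp r := by positivity
  calc ‖z * rch z‖ = r * (r ^ 5 * ‖Complex.exp (2 * π * Complex.I * z ^ 2)‖ /
        ‖Complex.exp (2 * π * z) - 1‖) := by
        simp only [rch, norm_mul, norm_div, norm_pow, hn]
    _ ≤ r * (r ^ 5 * 1 / (r * Real.exp r)) := by gcongr
    _ = r ^ 5 / Real.exp r := by field_simp
    _ ≤ 720 * min r r⁻¹ := by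
      have e4 := Real.pow_div_factorial_le_exp r hr.le 4
      have e6 := Real.pow_div_factorial_le_exp r hr.le 6
      norm_num [Nat.factorial] at e4 e6
      have hE := Real.exp_pos r
      rw [mul_min_of_nonneg _ _ (by norm_num), le_min_iff]
      constructor
      · rw [div_le_iff₀ hE]
        nlinarith
      · rw [div_le_iff₀ hE, ← div_eq_mul_inv, div_mul_eq_mul_div, le_div_iff₀ hr]
        nlinarith

lemma rc_phi_diff : DifferentiableOn ℂ (fun w => Complex.exp w * rch (Complex.exp w))
    (rcS (π / 4)) := by
  unfold rch
  refine DifferentiableOn.mul (by fun_prop) (DifferentiableOn.div (by fun_prop) (by fun_prop) ?_)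
  intro w hw h
  have hr := Real.exp_pos w.re
  have hd := rc_den_bound _ hr _ (rc_phi_geom w hw).1
  rw [h, norm_zero] at hd
  have : 0 < Real.exp w.re * Real.exp (Real.exp w.re) := by positivity
  linarith

lemma rc_exp_w : Complex.exp ((π / 4 : ℝ) * Complex.I) = rcw := by
  rw [Complex.exp_mul_I, ← Complex.ofReal_cos, ← Complex.ofReal_sin, Real.cos_pi_div_four,
    Real.sin_pi_div_four, rcw]
  have : √2 / 2 = 1 / √2 := by
    rw [div_eq_div_iff (by norm_num) (by positivity)]; simp
  rw [this]; ring

lemma rch_w (s : ℝ) : rch (rcw * s) = rcw ^ 5 * rck s := by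
  have : (2 * π * Complex.I * (rcw * s) ^ 2 : ℂ) = -(2 * π) * (s:ℂ) ^ 2 := by
    rw [mul_pow, rcw_sq]
    linear_combination (2 * π * (s:ℂ) ^ 2) * Complex.I_sq
  rw [rch, this, rck, rcG, rcf, ← mul_assoc (2 * (π:ℂ)) rcw]
  ring

lemma rch_int : IntegrableOn (fun t : ℝ => rch t) (Ioi 0) := by
  rw [← rc_exp_univ_integrable]
  have := rc_line_integrable _ (π / 4) rc_phi_diff.continuousOn 720 rc_phi_bound 0 le_rfl
    (by positivity)
  simpa using this

lemma rch_rot : ∫ t in Ioi (0:ℝ), rch t = rcw ^ 6 * ∫ s in Ioi (0:ℝ), rck s := by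
  have h := rc_strip _ (π / 4) (by positivity) rc_phi_diff 720 rc_phi_bound
  rw [← rc_exp_univ, ← rc_exp_univ, ← integral_const_mul]
  have hl : ∀ x : ℝ, Real.exp x • rch (Real.exp x : ℝ) =
      Complex.exp x * rch (Complex.exp x) := fun x => by simp
  have hr : ∀ x : ℝ, rcw ^ 6 * Real.exp x • rck (Real.exp x) =
      Complex.exp (x + (π / 4 : ℝ) * Complex.I) *
        rch (Complex.exp (x + (π / 4 : ℝ) * Complex.I)) := fun x => by
    rw [Complex.exp_add, rc_exp_w, mul_comm (Complex.exp x), ← Complex.ofReal_exp, rch_w,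
      Complex.real_smul]
    ring
  simp_rw [hl, hr]
  exact h

lemma rck_neg (s : ℝ) (hs : s ≠ 0) : rck (-s) = rck s + (s:ℂ) ^ 5 * rcG s := by
  have h1 := rcf_real_ne s hs
  have h2 : rcf (-s : ℝ) = -rcf s / (rcf s + 1) := by
    simp only [rcf, sub_add_cancel]
    push_cast
    rw [mul_neg, Complex.exp_neg]
    have := Complex.exp_ne_zero (2 * π * rcw * s)
    field_simp
    ring
  have hq : rcf s + 1 ≠ 0 := by simp [rcf]
  have hG : rcG (-s : ℝ) = rcG s := by simp [rcG]
  rw [rck, rck, h2, hG]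
  push_cast
  field_simp
  ring

lemma rck_halves : ∃ m : ℝ, ∫ s, rck s = 2 * (∫ s in Ioi (0:ℝ), rck s) + m := by
  refine ⟨∫ s in Ioi (0:ℝ), s ^ 5 * Real.exp (-(2 * π) * s ^ 2), ?_⟩
  have h1 := intervalIntegral.integral_Iic_add_Ioi (b := (0:ℝ)) rck_int.integrableOn rck_int.integrableOn
  have h2 := integral_comp_neg_Ioi (0:ℝ) rck
  rw [neg_zero] at h2
  have h3 : ∫ s in Ioi (0:ℝ), rck (-s) = ∫ s in Ioi (0:ℝ), (rck s + (s:ℂ) ^ 5 * rcG s) :=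
    setIntegral_congr_fun measurableSet_Ioi fun s hs => rck_neg s (ne_of_gt hs)
  rw [integral_add rck_int.integrableOn (rc_mom_int_c 5).integrableOn] at h3
  rw [← h1, ← h2, h3, ← integral_complex_ofReal]
  have : ∀ s : ℝ, (s:ℂ) ^ 5 * rcG s = ((s ^ 5 * Real.exp (-(2 * π) * s ^ 2) : ℝ) : ℂ) := by
    intro s; rw [rcG_ofReal]; push_cast; rfl
  simp_rw [this]
  ring

lemma rch_value : (2 * ∫ t in Ioi (0:ℝ), rch t).re = (1 / 256) * (1 - 5 / π + 5 / π ^ 2) := by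
  obtain ⟨m, hm⟩ := rck_halves
  have e6 : rcw ^ 6 = -Complex.I := by
    rw [show rcw ^ 6 = (rcw ^ 2) ^ 3 by ring, rcw_sq, Complex.I_pow_three]
  rw [← rck_value, rch_rot, hm, e6]
  simp

lemma rch_re (t : ℝ) : (2 * rch t).re =
    2 * (t ^ 5 * Real.cos (2 * π * t ^ 2) / (Real.exp (2 * π * t) - 1)) := by
  have h : rch t = ((t ^ 5 / (Real.exp (2 * π * t) - 1) : ℝ) : ℂ) *
      Complex.exp ((2 * π * t ^ 2 : ℝ) * Complex.I) := by
    rw [rch]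
    push_cast
    rw [show (2 * π * Complex.I * (t:ℂ) ^ 2) = 2 * π * (t:ℂ) ^ 2 * Complex.I by ring]
    ring
  rw [h, ← Complex.ofReal_ofNat, Complex.re_ofReal_mul, Complex.re_ofReal_mul,
    Complex.exp_ofReal_mul_I_re]
  ring

lemma rc_subst (t : ℝ) (ht : 0 < t) : ((2:ℝ) * t ^ ((2:ℝ) - 1)) • ((t ^ (2:ℝ)) ^ 2 *
    Real.cos (2 * π * (t ^ (2:ℝ))) / (Real.exp (2 * π * Real.sqrt (t ^ (2:ℝ))) - 1))
    = (2 * rch t).re := by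
  rw [rch_re, show (2:ℝ) - 1 = 1 by norm_num, Real.rpow_one, Real.rpow_two, Real.sqrt_sq ht.le,
    smul_eq_mul]
  ring

/-- Ramanujan's integral `R_C(2, 2)` converges and equals `(1/256)(1 - 5/π + 5/π²)`. -/
theorem ramanujan_RC_two_two :
    IntegrableOn
      (fun x : ℝ => x ^ 2 * Real.cos (2 * π * x) / (Real.exp (2 * π * Real.sqrt x) - 1)) (Ioi 0) ∧
    (∫ x in Ioi (0:ℝ), x ^ 2 * Real.cos (2 * π * x) / (Real.exp (2 * π * Real.sqrt x) - 1)) =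
      (1 / 256) * (1 - 5 / π + 5 / π ^ 2) := by
  have hi : IntegrableOn (fun t : ℝ => 2 * rch t) (Ioi 0) := rch_int.const_mul 2
  constructor
  · rw [← integrableOn_Ioi_comp_rpow_iff _ (two_ne_zero (α := ℝ))]
    refine IntegrableOn.congr_fun hi.re (fun t ht => ?_) measurableSet_Ioi
    simp only [abs_two]
    exact (rc_subst t ht).symm
  · rw [← integral_comp_rpow_Ioi_of_pos (two_pos (α := ℝ)), ← rch_value, ← integral_const_mul]
    rw [setIntegral_congr_fun measurableSet_Ioi (fun t ht => rc_subst t ht)]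
    exact integral_re hi
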